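/- (Theorem 2.7 of the paper, compactly supported solutions with prescribed center-of-mass moments.) Given any vector β = (β₁, β₂, β₃) ∈ ℝ³, there exists a smooth symmetric (0,2)-tensor field σ on ℝ³, compactly supported in the annulus A₁, which is trace-free (Σ_i σ_{ii}(x) = 0 for all x) and divergence-free ((div σ)_j = Σ_i ∂_i σ_{ij} = 0 everywhere for j = 1,2,3) — and in particular satisfies L σ = 0 — such that for each p = 1,2,3 one has ∫_{A₁} x_p Σ_{i,j,k} ((∂_k σ_{ij})(x))² dx = β_p. -/

import Mathlib

/-!
For a covector `ξ` put `a = ξ × e₀` and `b = ξ × a`. Both are orthogonal to `ξ` and to each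
other, so the symmetric matrix `a ⊗ b + b ⊗ a` is trace-free and annihilates `ξ`. Substituting
`ξ = ∂` turns it into a third order operator `ttOp` that sends every smooth scalar potential to
a trace-free, divergence-free symmetric tensor field without enlarging supports.

Apply it to a bump function `φ` supported in the sup-norm ball of radius `1/8` around the origin,
and let `g` be the density `∑ (∂ₖ σᵢⱼ)²` of the result. Its mass `E = ∫ g` is positive, because a
compactly supported function with a vanishing partial derivative is zero. Since `g` lives near the
origin, its center of mass `m` satisfies `|mₚ| ≤ 1/8`. Write `β = s u` with `u` a unit vector
and `s ≥ 0`. Translating the potential by `c = (3/2) u - m` moves the center of mass to `(3/2) u`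
and keeps the support in the annulus; scaling the potential by `t` with `t² = s / ((3/2) E)` then
gives the moments `t² E (3/2) u = β`.
-/

open MeasureTheory

/-- The `i`-th coordinate partial derivative of a function on `ℝ³`. -/
noncomputable def pd (i : Fin 3) (f : (Fin 3 → ℝ) → ℝ) (x : Fin 3 → ℝ) : ℝ :=
  fderiv ℝ f x (Pi.single i 1)

/-- The annulus `A₁ = {x : 1 < |x| < 2}` (Euclidean norm). -/
def annulusA₁ : Set (Fin 3 → ℝ) :=
  {x | 1 < Real.sqrt (∑ i, x i ^ 2) ∧ Real.sqrt (∑ i, x i ^ 2) < 2}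

/-! ### Calculus of the coordinate partial derivatives -/

lemma pd_contDiff {f : (Fin 3 → ℝ) → ℝ} (hf : ContDiff ℝ (⊤ : ℕ∞) f) (i : Fin 3) :
    ContDiff ℝ (⊤ : ℕ∞) (pd i f) :=
  (hf.fderiv_right (m := (⊤ : ℕ∞)) (by norm_cast)).clm_apply contDiff_const

lemma differentiable_of_smooth {f : (Fin 3 → ℝ) → ℝ} (hf : ContDiff ℝ (⊤ : ℕ∞) f) :
    Differentiable ℝ f :=
  hf.differentiable (by simp)

lemma pd_tsupport (f : (Fin 3 → ℝ) → ℝ) (i : Fin 3) : tsupport (pd i f) ⊆ tsupport f := by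
  refine closure_minimal (fun x hx => ?_) (isClosed_tsupport f)
  by_contra h
  apply hx
  have : fderiv ℝ f x = 0 := by
    by_contra h2
    exact h (support_fderiv_subset ℝ h2)
  simp [pd, this]

lemma pd_comm {f : (Fin 3 → ℝ) → ℝ} (hf : ContDiff ℝ (⊤ : ℕ∞) f) (i j : Fin 3) :
    pd i (pd j f) = pd j (pd i f) := by
  have key : ∀ i j x, pd i (pd j f) x
      = fderiv ℝ (fderiv ℝ f) x (Pi.single i 1) (Pi.single j 1) := by
    intro i j x
    have hd : DifferentiableAt ℝ (fderiv ℝ f) x :=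
      (hf.fderiv_right (m := (⊤ : ℕ∞)) (by norm_cast)).differentiable (by simp) x
    change fderiv ℝ (fun y => fderiv ℝ f y (Pi.single j 1)) x (Pi.single i 1) = _
    rw [fderiv_clm_apply hd (differentiableAt_const _)]
    simp
  funext x
  rw [key, key]
  have hs : IsSymmSndFDerivAt ℝ f x := by
    apply hf.contDiffAt.isSymmSndFDerivAt
    simp only [minSmoothness_of_isRCLikeNormedField]
    exact WithTop.coe_le_coe.2 le_top
  exact hs _ _

lemma pd_add {f g : (Fin 3 → ℝ) → ℝ} (hf : Differentiable ℝ f) (hg : Differentiable ℝ g)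
    (i : Fin 3) (x) : pd i (fun y => f y + g y) x = pd i f x + pd i g x := by
  simp only [pd]
  rw [fderiv_fun_add (hf x) (hg x)]
  simp

lemma pd_const_mul {f : (Fin 3 → ℝ) → ℝ} (hf : Differentiable ℝ f) (t : ℝ)
    (i : Fin 3) (x) : pd i (fun y => t * f y) x = t * pd i f x := by
  simp only [pd]
  rw [fderiv_const_mul (hf x)]
  simp

lemma pd_zero (i : Fin 3) (x) : pd i (fun _ => (0 : ℝ)) x = 0 := by
  simp [pd]

lemma pd_sum {F : Fin 3 → (Fin 3 → ℝ) → ℝ} (hF : ∀ j, Differentiable ℝ (F j))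
    (i : Fin 3) (x) : pd i (fun y => ∑ j, F j y) x = ∑ j, pd i (F j) x := by
  simp only [pd]
  rw [fderiv_fun_sum (fun j _ => hF j x)]
  simp

lemma pd_comp_sub (f : (Fin 3 → ℝ) → ℝ) (c : Fin 3 → ℝ) (i : Fin 3) (x) :
    pd i (fun y => f (y - c)) x = pd i f (x - c) := by
  simp only [pd]
  rw [fderiv_comp_sub]

/-- Rescaling the values and translating the argument commutes with partial derivatives. -/
lemma pd_scale_translate {f : (Fin 3 → ℝ) → ℝ} (hf : Differentiable ℝ f) (t : ℝ)
    (c : Fin 3 → ℝ) (i : Fin 3) :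
    pd i (fun y => t * f (y - c)) = fun y => t * pd i f (y - c) := by
  funext x
  have h2 : Differentiable ℝ (fun y => f (y - c)) :=
    hf.comp (differentiable_id.sub_const c)
  rw [pd_const_mul h2, pd_comp_sub]

/-- A compactly supported function that is constant along all lines in one coordinate direction
vanishes, since each such line leaves the support. -/
lemma eq_zero_of_pd_eq_zero {f : (Fin 3 → ℝ) → ℝ} (hf : Differentiable ℝ f)
    (hc : HasCompactSupport f) (i : Fin 3) (h : ∀ x, pd i f x = 0) (x) : f x = 0 := by
  obtain ⟨R, hR⟩ := hc.isCompact.isBounded.subset_closedBall 0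
  have hd : ∀ s : ℝ, HasDerivAt (fun s : ℝ => f (x + s • Pi.single i 1)) 0 s := by
    intro s
    have h1 : HasDerivAt (fun s : ℝ => x + s • (Pi.single i 1 : Fin 3 → ℝ)) (Pi.single i 1) s := by
      simpa using ((hasDerivAt_id s).smul_const (Pi.single i 1 : Fin 3 → ℝ)).const_add x
    have h2 := (hf (x + s • Pi.single i 1)).hasFDerivAt.comp_hasDerivAt s h1
    have h3 := h (x + s • Pi.single i 1)
    simp only [pd] at h3
    rw [h3] at h2
    exact h2
  have hconst := is_const_of_deriv_eq_zero (fun s => (hd s).differentiableAt)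
    (fun s => (hd s).deriv) 0 (|R| + 1 - x i)
  simp only [zero_smul, add_zero] at hconst
  rw [hconst]
  by_contra hne
  have hmem := hR (subset_tsupport f hne)
  rw [mem_closedBall_zero_iff] at hmem
  have h4 := norm_le_pi_norm (x + (|R| + 1 - x i) • (Pi.single i 1 : Fin 3 → ℝ)) i
  simp at h4
  have h5 := le_abs_self (|R| + 1)
  have h6 := le_abs_self R
  linarith

/-! ### A trace-free, divergence-free tensor field from a scalar potential -/

/-- The differential operator with symbol `a ⊗ b + b ⊗ a`, where `a = ξ × e₀ = (0, ξ₂, -ξ₁)` and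
`b = ξ × a = (-ξ₁² - ξ₂², ξ₀ ξ₁, ξ₀ ξ₂)`, applied to the scalar potential `f`. -/
noncomputable def ttOp (f : (Fin 3 → ℝ) → ℝ) (x : Fin 3 → ℝ) : Matrix (Fin 3) (Fin 3) ℝ :=
  !![0, (-1) * (pd 1 (pd 1 (pd 2 f)) x + pd 2 (pd 2 (pd 2 f)) x),
        pd 1 (pd 1 (pd 1 f)) x + pd 1 (pd 2 (pd 2 f)) x;
     (-1) * (pd 1 (pd 1 (pd 2 f)) x + pd 2 (pd 2 (pd 2 f)) x),
        2 * pd 0 (pd 1 (pd 2 f)) x,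
        pd 0 (pd 2 (pd 2 f)) x + (-1) * pd 0 (pd 1 (pd 1 f)) x;
     pd 1 (pd 1 (pd 1 f)) x + pd 1 (pd 2 (pd 2 f)) x,
        pd 0 (pd 2 (pd 2 f)) x + (-1) * pd 0 (pd 1 (pd 1 f)) x,
        (-2) * pd 0 (pd 1 (pd 2 f)) x]

/-- The density `∑ (∂ₖ σᵢⱼ)²` of the tensor field `σ = ttOp f`. -/
noncomputable def dens (f : (Fin 3 → ℝ) → ℝ) (x : Fin 3 → ℝ) : ℝ :=
  ∑ i, ∑ j, ∑ k, (pd k (fun y => ttOp f y i j) x) ^ 2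

lemma ttOp_contDiff {f : (Fin 3 → ℝ) → ℝ} (hf : ContDiff ℝ (⊤ : ℕ∞) f) (i j : Fin 3) :
    ContDiff ℝ (⊤ : ℕ∞) fun x => ttOp f x i j := by
  have h3 : ∀ i j k, ContDiff ℝ (⊤ : ℕ∞) (pd i (pd j (pd k f))) := fun i j k =>
    pd_contDiff (pd_contDiff (pd_contDiff hf k) j) i
  fin_cases i <;> fin_cases j <;> simp only [ttOp] <;>
    first
    | exact contDiff_const
    | exact contDiff_const.mul ((h3 _ _ _).add (h3 _ _ _))
    | exact (h3 _ _ _).add (contDiff_const.mul (h3 _ _ _))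
    | exact contDiff_const.mul (h3 _ _ _)
    | exact (h3 _ _ _).add (h3 _ _ _)

lemma ttOp_symm (f : (Fin 3 → ℝ) → ℝ) (x) : (ttOp f x).IsSymm := by
  ext i j
  fin_cases i <;> fin_cases j <;> rfl

lemma ttOp_trace (f : (Fin 3 → ℝ) → ℝ) (x) : ∑ i, ttOp f x i i = 0 := by
  simp [Fin.sum_univ_three, ttOp]

lemma ttOp_tsupport (f : (Fin 3 → ℝ) → ℝ) (i j : Fin 3) :
    tsupport (fun x => ttOp f x i j) ⊆ tsupport f := by
  refine closure_minimal (fun x hx => ?_) (isClosed_tsupport f)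
  by_contra h
  apply hx
  have h3 : ∀ i j k, pd i (pd j (pd k f)) x = 0 := fun i j k =>
    image_eq_zero_of_notMem_tsupport fun hh =>
      h (pd_tsupport _ _ (pd_tsupport _ _ (pd_tsupport _ _ hh)))
  fin_cases i <;> fin_cases j <;> simp [ttOp, h3]

lemma ttOp_div {f : (Fin 3 → ℝ) → ℝ} (hf : ContDiff ℝ (⊤ : ℕ∞) f) (j : Fin 3) (x) :
    ∑ i, pd i (fun y => ttOp f y i j) x = 0 := by
  have h1 : ∀ i, ContDiff ℝ (⊤ : ℕ∞) (pd i f) := fun i => pd_contDiff hf i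
  have h2 : ∀ i j, ContDiff ℝ (⊤ : ℕ∞) (pd i (pd j f)) := fun i j => pd_contDiff (h1 j) i
  have h3 : ∀ i j k, ContDiff ℝ (⊤ : ℕ∞) (pd i (pd j (pd k f))) := fun i j k =>
    pd_contDiff (h2 j k) i
  have d3 : ∀ i j k, Differentiable ℝ (pd i (pd j (pd k f))) := fun i j k =>
    differentiable_of_smooth (h3 i j k)
  have c1 : ∀ i j, pd i (pd j f) = pd j (pd i f) := pd_comm hf
  have c2 : ∀ i j k, pd i (pd j (pd k f)) = pd j (pd i (pd k f)) := fun i j k => pd_comm (h1 k) i j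
  have c3 : ∀ i j k l, pd i (pd j (pd k (pd l f))) = pd j (pd i (pd k (pd l f))) :=
    fun i j k l => pd_comm (h2 k l) i j
  have hm : ∀ (t : ℝ) i j k, Differentiable ℝ (fun y => t * pd i (pd j (pd k f)) y) :=
    fun t i j k => (d3 i j k).const_mul t
  have ha : ∀ i j k i' j' k', Differentiable ℝ
      (fun y => pd i (pd j (pd k f)) y + pd i' (pd j' (pd k' f)) y) :=
    fun i j k i' j' k' => (d3 i j k).add (d3 i' j' k')
  have e := fun l i j k t => pd_const_mul (d3 i j k) t l x
  have e2 := fun l i j k i' j' k' => pd_add (d3 i j k) (d3 i' j' k') l x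
  have e3 := fun l i j k i' j' k' t => pd_const_mul (ha i j k i' j' k') t l x
  have e4 := fun l i j k i' j' k' t => pd_add (d3 i j k) (hm t i' j' k') l x
  fin_cases j
  · simp only [Fin.sum_univ_three]
    change pd 0 (fun _ => 0) x
      + pd 1 (fun x => (-1) * (pd 1 (pd 1 (pd 2 f)) x + pd 2 (pd 2 (pd 2 f)) x)) x
      + pd 2 (fun x => pd 1 (pd 1 (pd 1 f)) x + pd 1 (pd 2 (pd 2 f)) x) x = 0
    rw [pd_zero, e3, e2, e2, c3 2 1 1 1, c2 2 1 1, c1 2 1, c3 2 1 2 2]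
    ring
  · simp only [Fin.sum_univ_three]
    change pd 0 (fun x => (-1) * (pd 1 (pd 1 (pd 2 f)) x + pd 2 (pd 2 (pd 2 f)) x)) x
      + pd 1 (fun x => 2 * pd 0 (pd 1 (pd 2 f)) x) x
      + pd 2 (fun x => pd 0 (pd 2 (pd 2 f)) x + (-1) * pd 0 (pd 1 (pd 1 f)) x) x = 0
    rw [e3, e2, e, e4, e, c3 1 0, c3 2 0, c3 2 0, c2 2 1 1, c1 2 1]
    ring
  · simp only [Fin.sum_univ_three]
    change pd 0 (fun x => pd 1 (pd 1 (pd 1 f)) x + pd 1 (pd 2 (pd 2 f)) x) x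
      + pd 1 (fun x => pd 0 (pd 2 (pd 2 f)) x + (-1) * pd 0 (pd 1 (pd 1 f)) x) x
      + pd 2 (fun x => (-2) * pd 0 (pd 1 (pd 2 f)) x) x = 0
    rw [e2, e4, e, e, c3 1 0, c3 1 0, c3 2 0, c2 2 1 2]
    ring

/-- The double divergence vanishes with the divergence, and the Laplacian of the trace with the
trace. -/
lemma ttOp_linScalar {f : (Fin 3 → ℝ) → ℝ} (hf : ContDiff ℝ (⊤ : ℕ∞) f) (x) :
    ∑ i, ∑ j, (pd i (fun y => pd j (fun z => ttOp f z i j) y) x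
          - pd j (fun y => pd j (fun z => ttOp f z i i) y) x) = 0 := by
  have d0 : ∀ i j, Differentiable ℝ (fun z => ttOp f z i j) := fun i j =>
    differentiable_of_smooth (ttOp_contDiff hf i j)
  have d1 : ∀ k i j, Differentiable ℝ (fun y => pd k (fun z => ttOp f z i j) y) := fun k i j =>
    differentiable_of_smooth (pd_contDiff (ttOp_contDiff hf i j) k)
  simp only [Finset.sum_sub_distrib]
  have hA : ∀ i, ∑ j, pd i (fun y => pd j (fun z => ttOp f z i j) y) x = 0 := by
    intro i
    rw [← pd_sum (fun j => d1 j i j)]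
    have : (fun y => ∑ j, pd j (fun z => ttOp f z i j) y) = fun _ => 0 := by
      funext y
      rw [← ttOp_div hf i y]
      refine Finset.sum_congr rfl fun j _ => ?_
      congr 1
      funext z
      exact (ttOp_symm f z).apply j i
    rw [this, pd_zero]
  have hB : ∀ j, ∑ i, pd j (fun y => pd j (fun z => ttOp f z i i) y) x = 0 := by
    intro j
    rw [← pd_sum (fun i => d1 j i i)]
    have : (fun y => ∑ i, pd j (fun z => ttOp f z i i) y) = fun _ => 0 := by
      funext y
      rw [← pd_sum (fun i => d0 i i)]
      simp only [ttOp_trace, pd_zero]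
    rw [this, pd_zero]
  rw [Finset.sum_comm (f := fun i j => pd j (fun y => pd j (fun z => ttOp f z i i) y) x)]
  simp [hA, hB]

/-! ### The density and its moments -/

lemma dens_nonneg (f : (Fin 3 → ℝ) → ℝ) (x) : 0 ≤ dens f x := by
  unfold dens; positivity

lemma dens_continuous {f : (Fin 3 → ℝ) → ℝ} (hf : ContDiff ℝ (⊤ : ℕ∞) f) :
    Continuous (dens f) := by
  have : ∀ i j k, Continuous (pd k (fun y => ttOp f y i j)) := fun i j k =>
    (pd_contDiff (ttOp_contDiff hf i j) k).continuous
  unfold dens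
  fun_prop

lemma dens_eq_zero (f : (Fin 3 → ℝ) → ℝ) {x} (hx : x ∉ tsupport f) : dens f x = 0 := by
  have h3 : ∀ i j k, pd k (fun y => ttOp f y i j) x = 0 := fun i j k =>
    image_eq_zero_of_notMem_tsupport fun hh => hx (ttOp_tsupport _ _ _ (pd_tsupport _ _ hh))
  simp [dens, h3]

lemma dens_scale_translate {f : (Fin 3 → ℝ) → ℝ} (hf : ContDiff ℝ (⊤ : ℕ∞) f) (t : ℝ)
    (c x : Fin 3 → ℝ) : dens (fun y => t * f (y - c)) x = t ^ 2 * dens f (x - c) := by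
  have h1 : ∀ i, ContDiff ℝ (⊤ : ℕ∞) (pd i f) := fun i => pd_contDiff hf i
  have h2 : ∀ i j, ContDiff ℝ (⊤ : ℕ∞) (pd i (pd j f)) := fun i j => pd_contDiff (h1 j) i
  have h3 : ∀ i j k, pd i (pd j (pd k (fun y => t * f (y - c))))
      = fun y => t * pd i (pd j (pd k f)) (y - c) := by
    intro i j k
    rw [pd_scale_translate (differentiable_of_smooth hf),
      pd_scale_translate (differentiable_of_smooth (h1 k)),
      pd_scale_translate (differentiable_of_smooth (h2 j k))]
  have h4 : ∀ i j, (fun y => ttOp (fun y => t * f (y - c)) y i j)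
      = fun y => t * (fun z => ttOp f z i j) (y - c) := by
    intro i j
    funext y
    fin_cases i <;> fin_cases j <;> simp [ttOp, h3] <;> ring
  unfold dens
  simp only [h4, Finset.mul_sum]
  refine Finset.sum_congr rfl fun i _ => Finset.sum_congr rfl fun j _ =>
    Finset.sum_congr rfl fun k _ => ?_
  rw [pd_scale_translate (differentiable_of_smooth (ttOp_contDiff hf i j))]
  ring

/-- If the density vanishes identically, then so do all `∂ₖ σ₁₁ = 2 ∂ₖ ∂₀ ∂₁ ∂₂ f`, and the four
derivatives can be stripped off one at a time. -/
lemma eq_zero_of_dens_eq_zero {f : (Fin 3 → ℝ) → ℝ} (hf : ContDiff ℝ (⊤ : ℕ∞) f)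
    (hc : HasCompactSupport f) (h : ∀ x, dens f x = 0) (x) : f x = 0 := by
  have h1 : ∀ i, ContDiff ℝ (⊤ : ℕ∞) (pd i f) := fun i => pd_contDiff hf i
  have h2 : ∀ i j, ContDiff ℝ (⊤ : ℕ∞) (pd i (pd j f)) := fun i j => pd_contDiff (h1 j) i
  have cpd : ∀ {g : (Fin 3 → ℝ) → ℝ}, HasCompactSupport g → ∀ i, HasCompactSupport (pd i g) :=
    fun hg i => hg.of_isClosed_subset (isClosed_tsupport _) (pd_tsupport _ i)
  have h0 : ∀ y, pd 0 (fun z => ttOp f z 1 1) y = 0 := by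
    intro y
    have hy := h y
    unfold dens at hy
    rw [Finset.sum_eq_zero_iff_of_nonneg (fun i _ => by positivity)] at hy
    have hy := hy 1 (Finset.mem_univ _)
    rw [Finset.sum_eq_zero_iff_of_nonneg (fun i _ => by positivity)] at hy
    have hy := hy 1 (Finset.mem_univ _)
    rw [Finset.sum_eq_zero_iff_of_nonneg (fun i _ => by positivity)] at hy
    exact pow_eq_zero_iff (two_ne_zero) |>.1 (hy 0 (Finset.mem_univ _))
  have h11 := eq_zero_of_pd_eq_zero (differentiable_of_smooth (ttOp_contDiff hf 1 1))
    (hc.of_isClosed_subset (isClosed_tsupport _) (ttOp_tsupport f 1 1)) 0 h0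
  have k3 : ∀ y, pd 0 (pd 1 (pd 2 f)) y = 0 := by
    intro y
    have := h11 y
    change 2 * pd 0 (pd 1 (pd 2 f)) y = 0 at this
    linarith
  have k2 := eq_zero_of_pd_eq_zero (differentiable_of_smooth (h2 1 2)) (cpd (cpd hc 2) 1) 0 k3
  have k1 := eq_zero_of_pd_eq_zero (differentiable_of_smooth (h1 2)) (cpd hc 2) 1 k2
  exact eq_zero_of_pd_eq_zero (differentiable_of_smooth hf) hc 2 k1 x

/-- A nonnegative density of positive mass near the origin, produced by a smooth potential. -/
lemma exists_potential : ∃ f : (Fin 3 → ℝ) → ℝ, ContDiff ℝ (⊤ : ℕ∞) f ∧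
    tsupport f ⊆ Metric.closedBall 0 (1 / 8) ∧ 0 < ∫ x, dens f x := by
  let φ : ContDiffBump (0 : Fin 3 → ℝ) := ⟨1 / 16, 1 / 8, by norm_num, by norm_num⟩
  have hφ : ContDiff ℝ (⊤ : ℕ∞) (φ : (Fin 3 → ℝ) → ℝ) := φ.contDiff
  refine ⟨φ, hφ, φ.tsupport_eq.le, ?_⟩
  have hc : HasCompactSupport (φ : (Fin 3 → ℝ) → ℝ) := φ.hasCompactSupport
  have hne : ∃ x, dens φ x ≠ 0 := by
    by_contra! hcon
    have h0 := eq_zero_of_dens_eq_zero hφ hc hcon 0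
    have h1 : φ 0 = 1 := φ.one_of_mem_closedBall (by simp [φ])
    rw [h1] at h0
    exact one_ne_zero h0
  obtain ⟨x, hx⟩ := hne
  exact (dens_continuous hφ).integral_pos_of_hasCompactSupport_nonneg_nonzero
    (HasCompactSupport.intro hc (fun y hy => dens_eq_zero _ hy)) (dens_nonneg _) hx

lemma exists_polar (β : Fin 3 → ℝ) :
    ∃ (u : Fin 3 → ℝ) (s : ℝ), ∑ i, u i ^ 2 = 1 ∧ 0 ≤ s ∧ ∀ p, β p = s * u p := by
  by_cases h : ∑ i, β i ^ 2 = 0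
  · refine ⟨Pi.single 0 1, 0, by simp [Fin.sum_univ_three], le_rfl, fun p => ?_⟩
    rw [Finset.sum_eq_zero_iff_of_nonneg (fun i _ => by positivity)] at h
    simpa using h p (Finset.mem_univ _)
  · have hpos : 0 < ∑ i, β i ^ 2 := lt_of_le_of_ne (by positivity) (Ne.symm h)
    have hs : 0 < √(∑ i, β i ^ 2) := Real.sqrt_pos.2 hpos
    refine ⟨fun p => β p / √(∑ i, β i ^ 2), √(∑ i, β i ^ 2), ?_, hs.le, fun p => ?_⟩
    · simp only [div_pow, ← Finset.sum_div, Real.sq_sqrt hpos.le]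
      exact div_self h
    · field_simp

/-- Since `√3 / 4 < 1/2`, a sup-norm ball of radius `1/4` around a point of Euclidean norm `3/2`
lies in the annulus. -/
lemma mem_annulus {u x : Fin 3 → ℝ} (hu : ∑ i, u i ^ 2 = 1)
    (hx : ∀ p, |x p - 3 / 2 * u p| ≤ 1 / 4) : x ∈ annulusA₁ := by
  set w : Fin 3 → ℝ := fun p => x p - 3 / 2 * u p with hw
  have hxw : ∀ p, x p = 3 / 2 * u p + w p := fun p => by simp [hw]
  have hw2 : ∀ p, w p ^ 2 ≤ 1 / 16 := fun p => by
    have := sq_le_sq' (neg_le_of_abs_le (hx p)) (le_of_abs_le (hx p))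
    norm_num at this ⊢; exact this
  have h0 := hw2 0
  have h1 := hw2 1
  have h2 := hw2 2
  simp only [Fin.sum_univ_three] at hu
  -- Cauchy–Schwarz for the cross term `u · w`
  have hcs : (u 0 * w 0 + u 1 * w 1 + u 2 * w 2) ^ 2 ≤ w 0 ^ 2 + w 1 ^ 2 + w 2 ^ 2 := by
    have : (u 0 * w 0 + u 1 * w 1 + u 2 * w 2) ^ 2
        ≤ (u 0 ^ 2 + u 1 ^ 2 + u 2 ^ 2) * (w 0 ^ 2 + w 1 ^ 2 + w 2 ^ 2) := by
      nlinarith [sq_nonneg (u 0 * w 1 - u 1 * w 0), sq_nonneg (u 0 * w 2 - u 2 * w 0),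
        sq_nonneg (u 1 * w 2 - u 2 * w 1)]
    rwa [hu, one_mul] at this
  set d := u 0 * w 0 + u 1 * w 1 + u 2 * w 2 with hd
  set q := w 0 ^ 2 + w 1 ^ 2 + w 2 ^ 2 with hq
  have hq3 : q ≤ 3 / 16 := by linarith
  have hsum : ∑ i, x i ^ 2 = 9 / 4 + 3 * d + q := by
    simp only [Fin.sum_univ_three, hxw, hd, hq]
    linear_combination (9 / 4) * hu
  have hdl : -(1 / 2) < d ∧ d < 1 / 2 := abs_lt.1 (abs_lt_of_sq_lt_sq (by linarith) (by norm_num))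
  constructor
  · rw [Real.lt_sqrt (by norm_num), hsum]
    nlinarith [sq_nonneg (d + 1 / 2), sq_nonneg (d + 3 / 7)]
  · rw [Real.sqrt_lt' (by norm_num), hsum]
    have : d < 7 / 16 := by nlinarith
    linarith

theorem compactly_supported_solutions_with_center_of_mass_moments
    (β : Fin 3 → ℝ) :
    ∃ σ : (Fin 3 → ℝ) → Matrix (Fin 3) (Fin 3) ℝ,
      (∀ i j, ContDiff ℝ (⊤ : ℕ∞) fun x => σ x i j) ∧
      (∀ x, (σ x).IsSymm) ∧
      (∀ i j, tsupport (fun x => σ x i j) ⊆ annulusA₁) ∧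
      -- trace-free
      (∀ x, ∑ i, σ x i i = 0) ∧
      -- divergence-free
      (∀ j x, ∑ i, pd i (fun y => σ y i j) x = 0) ∧
      -- in particular `L σ = 0`
      (∀ x, ∑ i, ∑ j,
        (pd i (fun y => pd j (fun z => σ z i j) y) x
          - pd j (fun y => pd j (fun z => σ z i i) y) x) = 0) ∧
      -- prescribed center-of-mass moments
      (∀ p, ∫ x in annulusA₁,
          x p * ∑ i, ∑ j, ∑ k, (pd k (fun y => σ y i j) x) ^ 2 = β p) := by
  obtain ⟨f, hf, hsupp, hE⟩ := exists_potential
  obtain ⟨u, s, hu, hs, hβ⟩ := exists_polar β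
  have hcf : HasCompactSupport f :=
    (isCompact_closedBall 0 (1 / 8)).of_isClosed_subset (isClosed_tsupport f) hsupp
  have hcd : HasCompactSupport (dens f) :=
    HasCompactSupport.intro hcf (fun y hy => dens_eq_zero _ hy)
  have hint : Integrable (dens f) :=
    (dens_continuous hf).integrable_of_hasCompactSupport hcd
  have hintp : ∀ p : Fin 3, Integrable (fun x : Fin 3 → ℝ => x p * dens f x) := fun p =>
    ((continuous_apply p).mul (dens_continuous hf)).integrable_of_hasCompactSupport
      hcd.mul_left
  set E := ∫ x, dens f x with hEdef
  set m : Fin 3 → ℝ := fun p => (∫ x, x p * dens f x) / E with hm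
  have hmb : ∀ p, |m p| ≤ 1 / 8 := by
    intro p
    rw [hm]
    simp only
    rw [abs_div, abs_of_pos hE, div_le_iff₀ hE, ← Real.norm_eq_abs, hEdef, ← integral_const_mul]
    refine norm_integral_le_of_norm_le (hint.const_mul _) (Filter.Eventually.of_forall fun x => ?_)
    by_cases hx : x ∈ tsupport f
    · rw [norm_mul, Real.norm_of_nonneg (dens_nonneg f x)]
      refine mul_le_mul_of_nonneg_right ?_ (dens_nonneg f x)
      exact (norm_le_pi_norm x p).trans (mem_closedBall_zero_iff.1 (hsupp hx))
    · simp [dens_eq_zero f hx]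
  set c : Fin 3 → ℝ := fun p => 3 / 2 * u p - m p with hc
  set t : ℝ := √(s / (3 / 2 * E)) with ht
  have ht2 : t ^ 2 = s / (3 / 2 * E) := Real.sq_sqrt (by positivity)
  set ψ : (Fin 3 → ℝ) → ℝ := fun y => t * f (y - c) with hψ
  have hψs : ContDiff ℝ (⊤ : ℕ∞) ψ :=
    contDiff_const.mul (hf.comp (contDiff_id.sub contDiff_const))
  have hψann : tsupport ψ ⊆ annulusA₁ := by
    have hball : tsupport ψ ⊆ Metric.closedBall c (1 / 8) := by
      refine closure_minimal (fun x hx => ?_) Metric.isClosed_closedBall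
      have hx' : f (x - c) ≠ 0 := right_ne_zero_of_mul hx
      have := mem_closedBall_zero_iff.1 (hsupp (subset_tsupport f hx'))
      rwa [Metric.mem_closedBall, dist_eq_norm]
    intro x hx
    refine mem_annulus hu fun p => ?_
    have h1 := hball hx
    rw [Metric.mem_closedBall, dist_eq_norm] at h1
    have h2 := (norm_le_pi_norm (x - c) p).trans h1
    rw [Real.norm_eq_abs, Pi.sub_apply] at h2
    have h3 : x p - 3 / 2 * u p = (x p - c p) - m p := by simp only [hc]; ring
    rw [h3]
    have := abs_sub (x p - c p) (m p)
    linarith [hmb p]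
  refine ⟨ttOp ψ, ttOp_contDiff hψs, ttOp_symm ψ, fun i j => (ttOp_tsupport ψ i j).trans hψann,
    ttOp_trace ψ, ttOp_div hψs, ttOp_linScalar hψs, fun p => ?_⟩
  change ∫ x in annulusA₁, x p * dens ψ x = β p
  rw [setIntegral_eq_integral_of_forall_compl_eq_zero
    (fun x hx => by rw [dens_eq_zero ψ (fun h => hx (hψann h)), mul_zero])]
  have hcv : ∫ x, x p * dens ψ x = ∫ x, t ^ 2 * (x p * dens f x + c p * dens f x) := by
    rw [← integral_sub_right_eq_self
      (fun x : Fin 3 → ℝ => t ^ 2 * (x p * dens f x + c p * dens f x)) c]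
    congr 1
    funext x
    rw [hψ, dens_scale_translate hf, Pi.sub_apply]
    ring
  rw [hcv, integral_const_mul, integral_add (hintp p) (hint.const_mul _), integral_const_mul,
    ← hEdef, ht2, hβ p]
  have hmE : ∫ x, x p * dens f x = m p * E := by
    simp only [hm]; field_simp
  rw [hmE]
  simp only [hc]
  field_simp
  ring
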